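/- Let (k : K → X, f : X → M) and (k' : K' → X', f' : X' → M) be Schreier extensions over the same monoid M, with K and K' commutative, and let ∗ and ∗' be the induced maps. Let X ×_M X' = {(x, x') ∈ X × X' : f(x) = f'(x')} (a submonoid of X × X'), let k'' : K × K' → X ×_M X' be (a, a') ↦ (k(a), k'(a')) and f'' : X ×_M X' → M be (x, x') ↦ f(x). Then (k'', f'') is a Schreier extension over M in which, for every m ∈ M, every pair (u, u') with u ∈ B_m and u' ∈ B'_m is a representative of m; and its induced map ∗'' satisfies m ∗'' (a, a') = (m ∗ a, m ∗' a') for all m ∈ M, a ∈ K, a' ∈ K'. -/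

import Mathlib

/-- A monoid extension: `K`, `X` additive monoids (not assumed commutative),
`M` a multiplicative monoid, `k : K → X` an injective monoid homomorphism whose image
is `{x | f x = 1}`, and `f : X → M` a surjective monoid homomorphism. -/
structure MonoidExtension {K X M : Type*} [AddMonoid K] [AddMonoid X] [Monoid M]
    (k : K → X) (f : X → M) : Prop where
  k_add : ∀ a b : K, k (a + b) = k a + k b
  k_zero : k 0 = 0
  k_inj : Function.Injective k
  ker_eq : ∀ x : X, f x = 1 ↔ x ∈ Set.range k
  f_add : ∀ x y : X, f (x + y) = f x * f y
  f_zero : f 0 = 1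
  f_surj : Function.Surjective f

/-- The set `B_m` of representatives of `m`. -/
def Reps {K X M : Type*} [AddMonoid K] [AddMonoid X] [Monoid M]
    (k : K → X) (f : X → M) (m : M) : Set X :=
  {u | f u = m ∧ ∀ x : X, f x = m → ∃! a : K, x = k a + u}

/-- A monoid extension is a Schreier extension if every `m` has a representative. -/
def IsSchreier {K X M : Type*} [AddMonoid K] [AddMonoid X] [Monoid M]
    (k : K → X) (f : X → M) : Prop :=
  ∀ m : M, (Reps k f m).Nonempty

/-! Every condition on `f'' (x, x') = f x` is also a condition on `f' x'`, because the two agree on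
the fibre product. Kernels and decompositions over a representative can therefore be found
independently in the two coordinates. -/

namespace MonoidExtension

variable {K X M K' X' : Type*} [AddMonoid K] [AddMonoid X] [Monoid M] [AddMonoid K'] [AddMonoid X']
  {k : K → X} {f : X → M} {k' : K' → X'} {f' : X' → M}

theorem f_k (hE : MonoidExtension k f) (a : K) : f (k a) = 1 :=
  (hE.ker_eq (k a)).2 ⟨a, rfl⟩

/-- The fibre product `X ×_M X'` of two monoid extensions, the middle term of their product. -/
def fiberProduct (hE : MonoidExtension k f) (hE' : MonoidExtension k' f') :
    AddSubmonoid (X × X') where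
  carrier := {p | f p.1 = f' p.2}
  zero_mem' := hE.f_zero.trans hE'.f_zero.symm
  add_mem' {p q} (hp : f p.1 = f' p.2) (hq : f q.1 = f' q.2) := by
    change f (p.1 + q.1) = f' (p.2 + q.2)
    rw [hE.f_add, hE'.f_add, hp, hq]

/-- The kernel map `k'' : K × K' → X ×_M X'` of the product extension. -/
def fiberIncl (hE : MonoidExtension k f) (hE' : MonoidExtension k' f') (c : K × K') :
    hE.fiberProduct hE' :=
  ⟨(k c.1, k' c.2), (hE.f_k c.1).trans (hE'.f_k c.2).symm⟩

/-- The projection `f'' : X ×_M X' → M` of the product extension, computed on the first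
coordinate. -/
def fiberProj (hE : MonoidExtension k f) (hE' : MonoidExtension k' f')
    (p : hE.fiberProduct hE') : M :=
  f p.1.1

theorem fiberProj_eq_one_iff (hE : MonoidExtension k f) (hE' : MonoidExtension k' f')
    (p : hE.fiberProduct hE') :
    hE.fiberProj hE' p = 1 ↔ p ∈ Set.range (hE.fiberIncl hE') := by
  constructor
  · intro hp
    obtain ⟨a, ha⟩ := (hE.ker_eq p.1.1).1 hp
    obtain ⟨a', ha'⟩ := (hE'.ker_eq p.1.2).1 (p.2.symm.trans hp)
    exact ⟨(a, a'), Subtype.ext (Prod.ext ha ha')⟩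
  · rintro ⟨c, rfl⟩
    exact hE.f_k c.1

theorem fiberProj_surjective (hE : MonoidExtension k f) (hE' : MonoidExtension k' f') :
    Function.Surjective (hE.fiberProj hE') := by
  intro m
  obtain ⟨x, hx⟩ := hE.f_surj m
  obtain ⟨x', hx'⟩ := hE'.f_surj m
  exact ⟨⟨(x, x'), hx.trans hx'.symm⟩, hx⟩

theorem fiberProduct_monoidExtension (hE : MonoidExtension k f) (hE' : MonoidExtension k' f') :
    MonoidExtension (hE.fiberIncl hE') (hE.fiberProj hE') where
  k_add c d := Subtype.ext (Prod.ext (hE.k_add c.1 d.1) (hE'.k_add c.2 d.2))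
  k_zero := Subtype.ext (Prod.ext hE.k_zero hE'.k_zero)
  k_inj := Function.Injective.of_comp (f := Subtype.val) (hE.k_inj.prodMap hE'.k_inj)
  ker_eq := hE.fiberProj_eq_one_iff hE'
  f_add p q := hE.f_add p.1.1 q.1.1
  f_zero := hE.f_zero
  f_surj := hE.fiberProj_surjective hE'

theorem mk_mem_reps_fiberProduct (hE : MonoidExtension k f) (hE' : MonoidExtension k' f')
    {m : M} {u : X} {u' : X'} (hu : u ∈ Reps k f m) (hu' : u' ∈ Reps k' f' m) :
    (⟨(u, u'), hu.1.trans hu'.1.symm⟩ : hE.fiberProduct hE') ∈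
      Reps (hE.fiberIncl hE') (hE.fiberProj hE') m := by
  refine ⟨hu.1, fun p hp => ?_⟩
  obtain ⟨a, ha, a_unique⟩ := hu.2 p.1.1 hp
  obtain ⟨a', ha', a'_unique⟩ := hu'.2 p.1.2 (p.2.symm.trans hp)
  refine ⟨(a, a'), Subtype.ext (Prod.ext ha ha'), fun b hb => ?_⟩
  have hb_val := congrArg Subtype.val hb
  exact Prod.ext (a_unique b.1 (congrArg Prod.fst hb_val))
    (a'_unique b.2 (congrArg Prod.snd hb_val))

end MonoidExtension

theorem product_schreier_extension_general {K X M K' X' : Type*}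
    [AddMonoid K] [AddMonoid X] [Monoid M] [AddMonoid K'] [AddMonoid X']
    (k : K → X) (f : X → M) (k' : K' → X') (f' : X' → M)
    (hE : MonoidExtension k f) (hE' : MonoidExtension k' f')
    (star : M → K → K) (star' : M → K' → K')
    (hstar : ∀ (m : M) (a : K) (u : X), u ∈ Reps k f m → u + k a = k (star m a) + u)
    (hstar' : ∀ (m : M) (a : K') (u : X'), u ∈ Reps k' f' m →
      u + k' a = k' (star' m a) + u) :
    (f (0 : X) = f' (0 : X')) ∧
    (∀ p q : X × X', f p.1 = f' p.2 → f q.1 = f' q.2 → f (p + q).1 = f' (p + q).2) ∧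
    Function.Injective (fun c : K × K' => ((k c.1, k' c.2) : X × X')) ∧
    (∀ c : K × K', f (k c.1) = f' (k' c.2)) ∧
    (∀ p : X × X', f p.1 = f' p.2 →
      (f p.1 = 1 ↔ ∃ c : K × K', ((k c.1, k' c.2) : X × X') = p)) ∧
    (∀ m : M, ∃ p : X × X', f p.1 = f' p.2 ∧ f p.1 = m) ∧
    (∀ (m : M) (u : X) (u' : X'), u ∈ Reps k f m → u' ∈ Reps k' f' m →
      f u = f' u' ∧ f u = m ∧
      ∀ p : X × X', f p.1 = f' p.2 → f p.1 = m →
        ∃! c : K × K', p = ((k c.1, k' c.2) : X × X') + (u, u')) ∧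
    (∀ (m : M) (a : K) (a' : K') (u : X) (u' : X'),
      u ∈ Reps k f m → u' ∈ Reps k' f' m →
      ((u, u') : X × X') + (k a, k' a') =
        ((k (star m a), k' (star' m a')) : X × X') + (u, u')) := by
  have hF := hE.fiberProduct_monoidExtension hE'
  refine ⟨(hE.fiberProduct hE').zero_mem, fun _ _ => (hE.fiberProduct hE').add_mem,
    Subtype.val_injective.comp hF.k_inj, fun c => (hE.fiberIncl hE' c).2, ?kernel, ?surjective,
    ?representatives, ?action⟩
  case kernel =>
    exact fun p hp => (hF.ker_eq ⟨p, hp⟩).trans (exists_congr fun _ => Subtype.ext_iff)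
  case surjective =>
    intro m
    obtain ⟨p, hp⟩ := hF.f_surj m
    exact ⟨p.1, p.2, hp⟩
  case representatives =>
    intro m u u' hu hu'
    have huu' := hE.mk_mem_reps_fiberProduct hE' hu hu'
    exact ⟨hu.1.trans hu'.1.symm, huu'.1, fun p hp hm =>
      (existsUnique_congr fun _ => Subtype.ext_iff).1 (huu'.2 ⟨p, hp⟩ hm)⟩
  case action =>
    exact fun m a a' u u' hu hu' => Prod.ext (hstar m a u hu) (hstar' m a' u' hu')

/-- Product of Schreier extensions (Proposition 7.3, prop:d_products): given two Schreier
extensions over the same `M` with commutative kernels, the fibre product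
`X ×_M X' = {(x, x') | f x = f' x'}` with `k'' (a, a') = (k a, k' a')` and
`f'' (x, x') = f x` is a Schreier extension over `M` in which every pair `(u, u')` of
representatives of `m` is a representative of `m`, and whose induced action satisfies
`m ∗'' (a, a') = (m ∗ a, m ∗' a')`.  Everything is phrased inside the ambient monoid
`X × X'`, relativised to the fibre-product submonoid `{p | f p.1 = f' p.2}`. -/
theorem product_schreier_extension {K X M K' X' : Type*}
    [AddCommMonoid K] [AddMonoid X] [Monoid M] [AddCommMonoid K'] [AddMonoid X']
    (k : K → X) (f : X → M) (k' : K' → X') (f' : X' → M)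
    (hE : MonoidExtension k f) (hE' : MonoidExtension k' f')
    (hS : IsSchreier k f) (hS' : IsSchreier k' f')
    (star : M → K → K) (star' : M → K' → K')
    (hstar : ∀ (m : M) (a : K) (u : X), u ∈ Reps k f m → u + k a = k (star m a) + u)
    (hstar' : ∀ (m : M) (a : K') (u : X'), u ∈ Reps k' f' m →
      u + k' a = k' (star' m a) + u) :
    -- the fibre product `D = {p | f p.1 = f' p.2}` is a submonoid of `X × X'`
    (f (0 : X) = f' (0 : X')) ∧
    (∀ p q : X × X', f p.1 = f' p.2 → f q.1 = f' q.2 → f (p + q).1 = f' (p + q).2) ∧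
    -- `k''` is an injective homomorphism landing in `D`, with image the kernel of `f''`
    Function.Injective (fun c : K × K' => ((k c.1, k' c.2) : X × X')) ∧
    (∀ c : K × K', f (k c.1) = f' (k' c.2)) ∧
    (∀ p : X × X', f p.1 = f' p.2 →
      (f p.1 = 1 ↔ ∃ c : K × K', ((k c.1, k' c.2) : X × X') = p)) ∧
    -- `f''` is surjective from `D` onto `M`
    (∀ m : M, ∃ p : X × X', f p.1 = f' p.2 ∧ f p.1 = m) ∧
    -- every pair of representatives `(u, u')` is a representative for the fibre product
    (∀ (m : M) (u : X) (u' : X'), u ∈ Reps k f m → u' ∈ Reps k' f' m →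
      f u = f' u' ∧ f u = m ∧
      ∀ p : X × X', f p.1 = f' p.2 → f p.1 = m →
        ∃! c : K × K', p = ((k c.1, k' c.2) : X × X') + (u, u')) ∧
    -- the induced action is the product action: `m ∗'' (a, a') = (m ∗ a, m ∗' a')`
    (∀ (m : M) (a : K) (a' : K') (u : X) (u' : X'),
      u ∈ Reps k f m → u' ∈ Reps k' f' m →
      ((u, u') : X × X') + (k a, k' a') =
        ((k (star m a), k' (star' m a')) : X × X') + (u, u')) :=
  product_schreier_extension_general k f k' f' hE hE' star star' hstar hstar'
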